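/- For the tribonacci number β and every z ≥ 1: S_β(9z) = [(01(011)^{z-1}01(011)^{z-1}01(011)^z)^∞]_β, S_β(9z+3) = [(01(011)^{z-1}01(011)^z01(011)^z)^∞]_β, and S_β(9z+6) = [(01(011)^{z-1}01(011)^{z+1}01(011)^z)^∞]_β. -/

import Mathlib

/-!
Put `q = 1/β`, so `q + q² + q³ = 1`, and describe a point `x < q` by its distance `u = q - x`
from `q`, the value of `(011)^∞`. Reading a block `011` (three steps of `T`) is possible iff
`0 < u ≤ q⁴` and sends `u` to `u / q³`; reading `01` followed by `0` (two steps) happens for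
`q⁴ < u ≤ q - q²` and sends `u` to `(u - q⁴) / q²`. In both cases the points strictly in between
are `≥ q`. Hence reading `01(011)^g` inverts the increasing affine contraction
`Φ g w = q⁴ + q^(3g+2) w`, and a smaller gap `g` gives a larger `u` (`Phi_lt_Phi`): lexicographic
comparison becomes comparison of gap sequences.

The value `v` of the periodic word with gaps `(k₁, k₂, k₃)` has `q - v = U₀`, the fixed point of
`Φ k₁ ∘ Φ k₂ ∘ Φ k₃`; if `U₀` exceeds `U₁ = Φ k₂ (Φ k₃ U₀)` and `U₂ = Φ k₃ U₀`, the orbit of `v`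
stays above `v` and returns to it first at time `p = 3(k₁+k₂+k₃)+6`. So `S β p ≥ v`.

Conversely, let an orbit of least period `p` stay strictly above `v` (`upper`). It splits into
blocks `01(011)^g`, and as `3 ∣ p` the number of blocks in a period is a multiple of `3`; it is not
`0` because `u ↦ u / q³` is expanding. All gaps are at least `k₁`, and a gap `k₁` is followed by a
gap at least `k₂` (`lex_gap`). Counting lengths leaves three blocks only, and then either a
rotation of `(k₁, k₂, k₃)`, whose fixed point is `U₀` itself, or three equal gaps, which
contradicts minimality of the period.
-/

open Function Filter

noncomputable section

/-- Left shift on sequences. -/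
def shift (x : ℕ → ℕ) : ℕ → ℕ := fun i => x (i + 1)

/-- Strict lexicographic order on digit sequences. -/
def seqLt (x y : ℕ → ℕ) : Prop := ∃ n, (∀ i < n, x i = y i) ∧ x n < y n

/-- Non-strict lexicographic order. -/
def seqLe (x y : ℕ → ℕ) : Prop := seqLt x y ∨ x = y

/-- The periodic sequence obtained by repeating the word `w`. -/
def wordSeq (w : List ℕ) : ℕ → ℕ := fun i => w.getD (i % w.length) 0

/-- The β-transformation x ↦ βx mod 1 on [0,1). -/
def Tmap (β : ℝ) : ℝ → ℝ := fun x => Int.fract (β * x)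

/-- Survivor set of the open dynamical system with hole [0, t). -/
def K (β t : ℝ) : Set ℝ := {x | x ∈ Set.Ico (0:ℝ) 1 ∧ ∀ n : ℕ, t ≤ (Tmap β)^[n] x}

/-- The critical value `S_β(p)`. -/
def S (β : ℝ) (p : ℕ) : ℝ :=
  sSup {t | t ∈ Set.Ico (0:ℝ) 1 ∧ ∃ x ∈ K β t, Function.minimalPeriod (Tmap β) x = p}

/-- Value of a digit sequence in base β. -/
def val (β : ℝ) (x : ℕ → ℕ) : ℝ := ∑' i, (x i : ℝ) / β ^ (i + 1)

/-- The inverse branch for the block `01(011)^g`, in the coordinate `u = q - x`. -/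
def Phi (q : ℝ) (g : ℕ) (w : ℝ) : ℝ := q ^ 4 + q ^ (3 * g + 2) * w

/-! ### The steps of the β-transformation -/

section steps

variable {β q : ℝ}

lemma inv_facts (hβ1 : β ^ 3 = β ^ 2 + β + 1) (hβ2 : 1 < β) (hb : β * q = 1) :
    0 < q ∧ q < 1 ∧ q + q ^ 2 + q ^ 3 = 1 := by
  have h0 : 0 < q := by
    by_contra h
    push Not at h
    nlinarith
  refine ⟨h0, by nlinarith, ?_⟩
  have : q ^ 3 * β ^ 3 = q ^ 3 * (β ^ 2 + β + 1) := by rw [hβ1]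
  have e : q ^ 3 * β ^ 3 = 1 := by rw [← mul_pow, mul_comm, hb, one_pow]
  have e2 : q ^ 3 * (β ^ 2 + β + 1) = q * (β * q) ^ 2 + q ^ 2 * (β * q) + q ^ 3 := by ring
  rw [e, e2, hb] at this
  linarith

lemma beta_eq (hβ1 : β ^ 3 = β ^ 2 + β + 1) (hb : β * q = 1) : β ^ 2 = β + 1 + q := by
  linear_combination q * hβ1 + (-β ^ 2 + β + 1) * hb

lemma beta_eq' (hβ1 : β ^ 3 = β ^ 2 + β + 1) (hb : β * q = 1) : β = 1 + q + q ^ 2 := by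
  have := beta_eq hβ1 hb
  linear_combination q * this + (-β + 1) * hb

lemma Tmap_eq {x : ℝ} (m : ℤ) (h0 : 0 ≤ β * x - m) (h1 : β * x - m < 1) :
    Tmap β x = β * x - m := by
  unfold Tmap
  rw [Int.fract_eq_iff]
  exact ⟨h0, h1, m, by ring⟩

lemma stepA (hβ1 : β ^ 3 = β ^ 2 + β + 1) (hβ2 : 1 < β) (hb : β * q = 1) {x : ℝ}
    (h1 : q ^ 4 < q - x) (h2 : q - x ≤ q - q ^ 2) :
    q ≤ Tmap β x ∧ q - x = q ^ 4 + q ^ 2 * (q - Tmap β (Tmap β x)) ∧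
      0 < q - Tmap β (Tmap β x) := by
  obtain ⟨hq0, hq1, hq⟩ := inv_facts hβ1 hβ2 hb
  have hβ' := beta_eq' hβ1 hb
  have hb4 : β * q ^ 4 = q ^ 3 := by linear_combination q ^ 3 * hb
  have hb2 : β * q ^ 2 = q := by linear_combination q * hb
  have l1 : q ≤ β * x := by nlinarith
  have l2 : β * x < 1 - q ^ 3 := by nlinarith
  have hq3 : 0 < q ^ 3 := by positivity
  have e1 : Tmap β x = β * x := by
    have := Tmap_eq (β := β) (x := x) 0 (by push_cast; linarith) (by push_cast; linarith)
    simpa using this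
  have l3 : β * (β * x) < 1 + q := by
    have : β * (β * x) < β * (1 - q ^ 3) := mul_lt_mul_of_pos_left l2 (by linarith)
    have e : β * (1 - q ^ 3) = 1 + q := by linear_combination hβ' - q ^ 2 * hb
    linarith
  have l4 : 1 ≤ β * (β * x) := by nlinarith
  have e2 : Tmap β (β * x) = β * (β * x) - 1 := by
    have := Tmap_eq (β := β) (x := β * x) 1 (by push_cast; linarith) (by push_cast; linarith)
    simpa using this
  rw [e1, e2]
  refine ⟨l1, ?_, by linarith⟩
  linear_combination (q * β * x + x) * hb - q * hq

lemma stepB (hβ1 : β ^ 3 = β ^ 2 + β + 1) (hβ2 : 1 < β) (hb : β * q = 1) {x : ℝ}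
    (h1 : 0 < q - x) (h2 : q - x ≤ q ^ 4) :
    q ≤ Tmap β x ∧ q ≤ Tmap β (Tmap β x) ∧
      q - x = q ^ 3 * (q - Tmap β (Tmap β (Tmap β x))) := by
  obtain ⟨hq0, hq1, hq⟩ := inv_facts hβ1 hβ2 hb
  have hβ' := beta_eq' hβ1 hb
  have hβ'' := beta_eq hβ1 hb
  have hb4 : β * q ^ 4 = q ^ 3 := by linear_combination q ^ 3 * hb
  have hq2 : 0 < q ^ 2 := by positivity
  have hq3 : 0 < q ^ 3 := by positivity
  have l1 : 1 - q ^ 3 ≤ β * x := by nlinarith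
  have l2 : β * x < 1 := by nlinarith
  have e1 : Tmap β x = β * x := by
    have := Tmap_eq (β := β) (x := x) 0 (by push_cast; linarith) (by push_cast; linarith)
    simpa using this
  have l3 : 1 + q ≤ β * (β * x) := by
    have : β * (1 - q ^ 3) ≤ β * (β * x) := mul_le_mul_of_nonneg_left l1 (by linarith)
    have e : β * (1 - q ^ 3) = 1 + q := by linear_combination hβ' - q ^ 2 * hb
    linarith
  have l4 : β * (β * x) < β := by nlinarith
  have e2 : Tmap β (β * x) = β * (β * x) - 1 := by
    have := Tmap_eq (β := β) (x := β * x) 1 (by push_cast; linarith) (by push_cast; linarith)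
    simpa using this
  have l5 : β * q ≤ β * (β * (β * x) - 1) :=
    mul_le_mul_of_nonneg_left (by linarith) (by linarith)
  have l6 : β * (β * (β * x) - 1) < β * (β - 1) :=
    mul_lt_mul_of_pos_left (by linarith) (by linarith)
  have e3 : Tmap β (β * (β * x) - 1) = β * (β * (β * x) - 1) - 1 := by
    have := Tmap_eq (β := β) (x := β * (β * x) - 1) 1 (by push_cast; linarith)
      (by push_cast; nlinarith)
    simpa using this
  rw [e1, e2, e3]
  refine ⟨by linarith, by linarith, ?_⟩
  linear_combination (q ^ 2 * β ^ 2 * x + q * β * x + x - q ^ 2) * hb - q * hq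

end steps

/-! ### The inverse branches -/

section branches

variable {q : ℝ}

lemma Phi_lt_Phi (hq0 : 0 < q) (hq1 : q < 1) {g g' : ℕ} (h : g < g') {w w' : ℝ}
    (hw : q ^ 4 < w) (hw' : w' ≤ q) : Phi q g' w' < Phi q g w := by
  unfold Phi
  have h1 : q ^ (3 * g' + 2) ≤ q ^ (3 * g + 5) :=
    pow_le_pow_of_le_one hq0.le hq1.le (by omega)
  have hp : 0 < q ^ (3 * g + 2) := by positivity
  have h2 : q ^ (3 * g' + 2) * w' ≤ q ^ (3 * g + 2) * q ^ 4 := by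
    calc q ^ (3 * g' + 2) * w' ≤ q ^ (3 * g' + 2) * q := by gcongr
      _ ≤ q ^ (3 * g + 5) * q := by gcongr
      _ = q ^ (3 * g + 2) * q ^ 4 := by ring
  have h3 : q ^ (3 * g + 2) * q ^ 4 < q ^ (3 * g + 2) * w := by gcongr
  linarith

lemma Phi_lt_iff (hq0 : 0 < q) (g : ℕ) {w w' : ℝ} : Phi q g w < Phi q g w' ↔ w < w' := by
  unfold Phi
  have hp : 0 < q ^ (3 * g + 2) := by positivity
  simp [hp]

lemma Phi_sub (g : ℕ) (w w' : ℝ) : Phi q g w - Phi q g w' = q ^ (3 * g + 2) * (w - w') := by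
  unfold Phi; ring

lemma Phi_gt (hq0 : 0 < q) (g : ℕ) {w : ℝ} (hw : 0 < w) : q ^ 4 < Phi q g w := by
  unfold Phi
  have : 0 < q ^ (3 * g + 2) * w := by positivity
  linarith

lemma Phi_le (hq0 : 0 < q) (hq : q + q ^ 2 + q ^ 3 = 1) (hq1 : q < 1) (g : ℕ) {w : ℝ}
    (hw : w ≤ q ^ 3) : Phi q g w ≤ q ^ 3 := by
  unfold Phi
  have h1 : q ^ (3 * g + 2) ≤ q ^ 2 := pow_le_pow_of_le_one hq0.le hq1.le (by omega)
  have h2 : q ^ (3 * g + 2) * w ≤ q ^ 2 * q ^ 3 := by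
    calc q ^ (3 * g + 2) * w ≤ q ^ (3 * g + 2) * q ^ 3 := by gcongr
      _ ≤ q ^ 2 * q ^ 3 := by gcongr
  have h3 : 0 < q ^ 6 := by positivity
  have h4 : q ^ 3 = q ^ 4 + q ^ 2 * q ^ 3 + q ^ 6 := by linear_combination -q ^ 3 * hq
  linarith

lemma pow_mul3_lt (hq0 : 0 < q) (hq1 : q < 1) (a b c : ℕ) :
    0 < q ^ (3 * a + 2) * q ^ (3 * b + 2) * q ^ (3 * c + 2) ∧
      q ^ (3 * a + 2) * q ^ (3 * b + 2) * q ^ (3 * c + 2) < 1 := by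
  refine ⟨by positivity, ?_⟩
  rw [← pow_add, ← pow_add]
  exact pow_lt_one₀ hq0.le hq1 (by omega)

/-- The fixed point of a composition of three branches is unique. -/
lemma fix_unique (hq0 : 0 < q) (hq1 : q < 1) {a b c : ℕ} {u v : ℝ}
    (hu : u = Phi q a (Phi q b (Phi q c u))) (hv : v = Phi q a (Phi q b (Phi q c v))) :
    u = v := by
  have h : u - v = q ^ (3 * a + 2) * q ^ (3 * b + 2) * q ^ (3 * c + 2) * (u - v) := by
    conv_lhs => rw [hu, hv]
    rw [Phi_sub, Phi_sub, Phi_sub]; ring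
  obtain ⟨-, h1⟩ := pow_mul3_lt hq0 hq1 a b c
  have : (1 - q ^ (3 * a + 2) * q ^ (3 * b + 2) * q ^ (3 * c + 2)) * (u - v) = 0 := by
    linear_combination h
  rcases mul_eq_zero.1 this with h2 | h2
  · linarith
  · linarith

lemma fix_bounds (hq0 : 0 < q) (hq1 : q < 1) (hq : q + q ^ 2 + q ^ 3 = 1) {a b c : ℕ} {u : ℝ}
    (hu : u = Phi q a (Phi q b (Phi q c u))) : q ^ 4 < u ∧ u ≤ q ^ 3 := by
  obtain ⟨h0, h1⟩ := pow_mul3_lt hq0 hq1 a b c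
  have key : ∀ w, u - Phi q a (Phi q b (Phi q c w)) =
      q ^ (3 * a + 2) * q ^ (3 * b + 2) * q ^ (3 * c + 2) * (u - w) := by
    intro w
    conv_lhs => rw [hu]
    rw [Phi_sub, Phi_sub, Phi_sub]; ring
  have hle : u ≤ q ^ 3 := by
    have h2 := key (q ^ 3)
    have h3 := Phi_le hq0 hq hq1 a (Phi_le hq0 hq hq1 b (Phi_le hq0 hq hq1 c le_rfl))
    by_contra h
    push Not at h
    nlinarith
  have hpos : 0 < u := by
    have h2 := key 0
    have h3 : 0 < Phi q a (Phi q b (Phi q c 0)) := by unfold Phi; positivity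
    by_contra h
    push Not at h
    nlinarith
  have h4 : (0 : ℝ) < q ^ 4 := by positivity
  refine ⟨?_, hle⟩
  rw [hu]
  exact Phi_gt hq0 a (h4.trans (Phi_gt hq0 b (h4.trans (Phi_gt hq0 c hpos))))

/-- Lexicographic comparison of the first two gaps of a point `u < U0` with the gaps `k1, k2` of
`U0`, provided the next point `w` is also below `U0`. -/
lemma lex_gap (hq0 : 0 < q) (hq1 : q < 1) {k1 k2 g g' : ℕ} {U0 U1 U2 u w w' : ℝ}
    (hU0 : U0 = Phi q k1 U1) (hU1 : U1 = Phi q k2 U2) (b1 : U1 ≤ q) (b2 : U2 ≤ q)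
    (hu : u = Phi q g w) (hw : w = Phi q g' w') (hwA : q ^ 4 < w) (hwA' : q ^ 4 < w')
    (hlt : u < U0) : k1 ≤ g ∧ (g = k1 → k2 ≤ g') := by
  constructor
  · by_contra h
    push Not at h
    have := Phi_lt_Phi hq0 hq1 h hwA b1
    rw [hu, hU0] at hlt
    linarith
  · rintro rfl
    by_contra h
    push Not at h
    rw [hu, hU0, Phi_lt_iff hq0, hw, hU1] at hlt
    have := Phi_lt_Phi hq0 hq1 h hwA' b2
    linarith

end branches

/-! ### No orbit lies strictly above the candidate -/

section upper

variable {q : ℝ} {u : ℕ → ℝ}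

/-- From a point `< q` the orbit reads `011` some `g` times until `010` is next, without passing a
given later time `n + r` at which `010` is read. -/
lemma gapB (hB : ∀ n, 0 < u n → u n ≤ q ^ 4 →
      u (n + 1) ≤ 0 ∧ u (n + 2) ≤ 0 ∧ u n = q ^ 3 * u (n + 3)) (hq0 : 0 < q) :
    ∀ r n, 0 < u n → q ^ 4 < u (n + r) →
      ∃ g, 3 * g ≤ r ∧ q ^ 4 < u (n + 3 * g) ∧ u n = q ^ (3 * g) * u (n + 3 * g) := by
  intro r
  induction r using Nat.strong_induction_on with
  | _ r ih =>
    intro n hn hr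
    have h4 : (0 : ℝ) < q ^ 4 := by positivity
    have h3 : (0 : ℝ) < q ^ 3 := by positivity
    by_cases hA : q ^ 4 < u n
    · exact ⟨0, by omega, by simpa using hA, by simp⟩
    push Not at hA
    obtain ⟨b1, b2, b3⟩ := hB n hn hA
    match r, hr, ih with
    | 0, hr, _ => exact absurd hr (by simpa using hA)
    | 1, hr, _ => linarith
    | 2, hr, _ => linarith
    | r + 3, hr, ih =>
      have hp : 0 < u (n + 3) := by
        rw [b3] at hn
        exact (mul_pos_iff_of_pos_left h3).1 hn
      obtain ⟨g, g1, g2, g3⟩ := ih r (by omega) (n + 3) hp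
        (by rwa [show n + 3 + r = n + (r + 3) by ring])
      have e : n + 3 + 3 * g = n + 3 * (g + 1) := by ring
      rw [e] at g2 g3
      refine ⟨g + 1, by omega, g2, ?_⟩
      rw [b3, g3]; ring

/-- Between two times `n < m` at which `010` is read, the orbit traverses a full block
`01(011)^g`, ending at a time at most `m`. -/
lemma gapA (hA : ∀ n, q ^ 4 < u n →
      u (n + 1) ≤ 0 ∧ u n = q ^ 4 + q ^ 2 * u (n + 2) ∧ 0 < u (n + 2))
    (hB : ∀ n, 0 < u n → u n ≤ q ^ 4 →
      u (n + 1) ≤ 0 ∧ u (n + 2) ≤ 0 ∧ u n = q ^ 3 * u (n + 3)) (hq0 : 0 < q)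
    {n m : ℕ} (hn : q ^ 4 < u n) (hm : q ^ 4 < u m) (hnm : n < m) :
    ∃ g, n + 3 * g + 2 ≤ m ∧ q ^ 4 < u (n + 3 * g + 2) ∧
      u n = Phi q g (u (n + 3 * g + 2)) := by
  obtain ⟨a1, a2, a3⟩ := hA n hn
  have h4 : (0 : ℝ) < q ^ 4 := by positivity
  have : m ≠ n + 1 := by rintro rfl; linarith
  obtain ⟨g, g1, g2, g3⟩ := gapB hB hq0 (m - (n + 2)) (n + 2) a3
    (by rwa [show n + 2 + (m - (n + 2)) = m by omega])
  have e : n + 2 + 3 * g = n + 3 * g + 2 := by ring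
  rw [e] at g2 g3
  refine ⟨g, by omega, g2, ?_⟩
  rw [a2, g3]; unfold Phi; ring

/-- Three gaps with the total length of the candidate and lexicographically admissible in the sense
of `lex_gap` are all equal, unless they are a rotation of the gaps of the candidate. -/
lemma three_gaps {k k2 p g1 g2 g3 : ℕ}
    (hp : p = 9 * k + 9 ∧ k2 = k ∨ p = 9 * k + 12 ∧ k2 = k + 1 ∨ p = 9 * k + 15 ∧ k2 = k + 2)
    (hs : 3 * (g1 + g2 + g3) + 6 = p) (c1 : k ≤ g1) (c2 : k ≤ g2) (c3 : k ≤ g3)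
    (d1 : g1 = k → k2 ≤ g2) (d2 : g2 = k → k2 ≤ g3) (d3 : g3 = k → k2 ≤ g1)
    (r1 : ¬ (g1 = k ∧ g2 = k2 ∧ g3 = k + 1)) (r2 : ¬ (g2 = k ∧ g3 = k2 ∧ g1 = k + 1))
    (r3 : ¬ (g3 = k ∧ g1 = k2 ∧ g2 = k + 1)) : g1 = g2 ∧ g2 = g3 := by
  obtain ⟨a, rfl⟩ := Nat.exists_eq_add_of_le c1
  obtain ⟨b, rfl⟩ := Nat.exists_eq_add_of_le c2
  have ha : a ≤ 3 := by omega
  have hb : b ≤ 3 := by omega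
  rcases hp with ⟨rfl, rfl⟩ | ⟨rfl, rfl⟩ | ⟨rfl, rfl⟩ <;> interval_cases a <;>
    interval_cases b <;> omega

lemma upper (hA : ∀ n, q ^ 4 < u n →
      u (n + 1) ≤ 0 ∧ u n = q ^ 4 + q ^ 2 * u (n + 2) ∧ 0 < u (n + 2))
    (hB : ∀ n, 0 < u n → u n ≤ q ^ 4 →
      u (n + 1) ≤ 0 ∧ u (n + 2) ≤ 0 ∧ u n = q ^ 3 * u (n + 3))
    (hq0 : 0 < q) (hq1 : q < 1)
    {k k2 p : ℕ} {U0 U1 U2 : ℝ}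
    (hp : p = 9 * k + 9 ∧ k2 = k ∨ p = 9 * k + 12 ∧ k2 = k + 1 ∨ p = 9 * k + 15 ∧ k2 = k + 2)
    (hper : ∀ n, u (n + p) = u n) (hprim : ∀ n j, 0 < j → j < p → u (n + j) ≠ u n)
    (hstart : ∃ n, 0 < u n)
    (hU0 : U0 = Phi q k U1) (hU1 : U1 = Phi q k2 U2) (hU2 : U2 = Phi q (k + 1) U0)
    (b1 : U1 ≤ q) (b2 : U2 ≤ q) (hlt : ∀ n, u n < U0) : False := by
  have h4 : (0 : ℝ) < q ^ 4 := by positivity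
  have h3 : (0 : ℝ) < q ^ 3 := by positivity
  -- Otherwise only `011` would be read, and the expanding map `u ↦ u / q³` has no periodic point.
  have hzone : ∃ n, q ^ 4 < u n := by
    by_contra hno
    push Not at hno
    obtain ⟨n, hn⟩ := hstart
    have H : ∀ j, 0 < u (n + 3 * j) ∧ u n = q ^ (3 * j) * u (n + 3 * j) := by
      intro j
      induction j with
      | zero => exact ⟨by simpa using hn, by simp⟩
      | succ j ih =>
        obtain ⟨i1, i2⟩ := ih
        obtain ⟨-, -, c⟩ := hB _ i1 (hno _)
        have e : n + 3 * j + 3 = n + 3 * (j + 1) := by ring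
        rw [e] at c
        refine ⟨?_, ?_⟩
        · rw [c] at i1
          exact (mul_pos_iff_of_pos_left h3).1 i1
        · rw [i2, c]; ring
    obtain ⟨j, hj⟩ : ∃ j, p = 3 * (j + 1) := ⟨p / 3 - 1, by omega⟩
    have h := (H (j + 1)).2
    rw [← hj, hper] at h
    have hlt1 : q ^ p < 1 := pow_lt_one₀ hq0.le hq1 (by omega)
    nlinarith
  obtain ⟨n, hn⟩ := hzone
  have hm : q ^ 4 < u (n + p) := by rwa [hper]
  have lex := fun {g g' : ℕ} {x w w' : ℝ} (hu : x = Phi q g w) (hw : w = Phi q g' w')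
    (hwA : q ^ 4 < w) (hwA' : q ^ 4 < w') (hl : x < U0) =>
    lex_gap hq0 hq1 hU0 hU1 b1 b2 hu hw hwA hwA' hl
  -- The first two block ends are not at time `n + p`, as `3 ∣ p`.
  obtain ⟨g1, l1, z1, e1⟩ := gapA hA hB hq0 hn hm (by omega)
  obtain ⟨g2, l2, z2, e2⟩ := gapA hA hB hq0 z1 hm (by omega)
  obtain ⟨g3, l3, z3, e3⟩ := gapA hA hB hq0 z2 hm (by omega)
  obtain ⟨c1, d1⟩ := lex e1 e2 z1 z2 (hlt _)
  obtain ⟨c2, d2⟩ := lex e2 e3 z2 z3 (hlt _)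
  rcases Nat.eq_or_lt_of_le l3 with heq | hl
  · have hclose : u (n + 3 * g1 + 2 + 3 * g2 + 2 + 3 * g3 + 2) = u n := by rw [heq, hper]
    rw [hclose] at e3 z3
    obtain ⟨c3, d3⟩ := lex e3 e1 z3 z1 (hlt _)
    set x0 := u n with hx0
    set x1 := u (n + 3 * g1 + 2) with hx1
    set x2 := u (n + 3 * g1 + 2 + 3 * g2 + 2) with hx2
    -- A rotation with gaps `(k, k2, k + 1)` would be the fixed point `U0` itself.
    have fix : ∀ {y0 y1 y2 : ℝ}, y0 = Phi q k y1 → y1 = Phi q k2 y2 → y2 = Phi q (k + 1) y0 →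
        y0 < U0 → False := by
      intro y0 y1 y2 f0 f1 f2 hl
      refine hl.ne (fix_unique hq0 hq1 (a := k) (b := k2) (c := k + 1) ?_ ?_)
      · rw [← f2, ← f1, ← f0]
      · rw [← hU2, ← hU1, ← hU0]
    have r1 : ¬ (g1 = k ∧ g2 = k2 ∧ g3 = k + 1) := by
      rintro ⟨rfl, rfl, rfl⟩
      exact fix e1 e2 e3 (hlt _)
    have r2 : ¬ (g2 = k ∧ g3 = k2 ∧ g1 = k + 1) := by
      rintro ⟨rfl, rfl, rfl⟩
      exact fix e2 e3 e1 (hlt _)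
    have r3 : ¬ (g3 = k ∧ g1 = k2 ∧ g2 = k + 1) := by
      rintro ⟨rfl, rfl, rfl⟩
      exact fix e3 e1 e2 (hlt _)
    have hall : g1 = g2 ∧ g2 = g3 :=
      three_gaps hp (by omega) c1 c2 c3 d1 d2 d3 r1 r2 r3
    obtain ⟨rfl, rfl⟩ := hall
    have h01 : x1 = x0 := by
      refine fix_unique hq0 hq1 (a := g1) (b := g1) (c := g1) ?_ ?_
      · rw [← e1, ← e3, ← e2]
      · rw [← e3, ← e2, ← e1]
    exact hprim n (3 * g1 + 2) (by omega) (by omega) h01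
  · obtain ⟨g4, l4, z4, e4⟩ := gapA hA hB hq0 z3 hm hl
    obtain ⟨g5, l5, z5, e5⟩ := gapA hA hB hq0 z4 hm (by omega)
    obtain ⟨g6, l6, z6, e6⟩ := gapA hA hB hq0 z5 hm (by omega)
    obtain ⟨c3, d3⟩ := lex e3 e4 z3 z4 (hlt _)
    obtain ⟨c4, d4⟩ := lex e4 e5 z4 z5 (hlt _)
    obtain ⟨c5, d5⟩ := lex e5 e6 z5 z6 (hlt _)
    have c6 : k ≤ g6 := by
      by_contra h
      push Not at h
      have h' := Phi_lt_Phi hq0 hq1 h z6 b1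
      rw [← e6, ← hU0] at h'
      exact absurd (hlt _) (not_lt.2 h'.le)
    omega

end upper

/-! ### The orbit of the candidate -/

section lower

variable {β q : ℝ}

lemma chainB (hβ1 : β ^ 3 = β ^ 2 + β + 1) (hβ2 : 1 < β) (hb : β * q = 1) {w : ℝ}
    (hw0 : 0 < w) (hw : w ≤ q) (g : ℕ) : ∀ y, q - y = q ^ (3 * g) * w →
      (∀ j < 3 * g, q - (Tmap β)^[j] y ≤ q ^ 4) ∧ (Tmap β)^[3 * g] y = q - w := by
  obtain ⟨hq0, hq1, hq⟩ := inv_facts hβ1 hβ2 hb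
  have h4 : (0 : ℝ) < q ^ 4 := by positivity
  have h3 : (0 : ℝ) < q ^ 3 := by positivity
  induction g with
  | zero =>
    intro y hy
    refine ⟨by simp, ?_⟩
    simp at hy ⊢
    linarith
  | succ g ih =>
    intro y hy
    have hle : q - y ≤ q ^ 4 := by
      have h1 : q ^ (3 * (g + 1)) ≤ q ^ 3 := pow_le_pow_of_le_one hq0.le hq1.le (by omega)
      calc q - y = q ^ (3 * (g + 1)) * w := hy
        _ ≤ q ^ 3 * q := by gcongr
        _ = q ^ 4 := by ring
    obtain ⟨s1, s2, s3⟩ := stepB hβ1 hβ2 hb (x := y) (by rw [hy]; positivity) hle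
    obtain ⟨i1, i2⟩ := ih (Tmap β (Tmap β (Tmap β y))) (by
      have e : q ^ 3 * (q - Tmap β (Tmap β (Tmap β y))) = q ^ 3 * (q ^ (3 * g) * w) := by
        rw [← s3, hy]; ring
      exact mul_left_cancel₀ h3.ne' e)
    refine ⟨?_, ?_⟩
    · intro j hj
      match j, hj with
      | 0, _ => simpa using hle
      | 1, _ => simp only [iterate_succ, iterate_zero, comp_apply, id]; linarith
      | 2, _ => simp only [iterate_succ, iterate_zero, comp_apply, id]; linarith
      | j + 3, hj => simpa using i1 j (by omega)
    · rw [show 3 * (g + 1) = 3 * g + 3 by ring]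
      simpa using i2

/-- A point reading `01(011)^g` meets no other point with `u > q⁴` before the block ends. -/
lemma run (hβ1 : β ^ 3 = β ^ 2 + β + 1) (hβ2 : 1 < β) (hb : β * q = 1) {w y : ℝ} {g : ℕ}
    (hw0 : q ^ 4 < w) (hw : w ≤ q ^ 3) (hy : q - y = Phi q g w) :
      (∀ j < 3 * g + 2, 0 < j → q - (Tmap β)^[j] y ≤ q ^ 4) ∧
      (Tmap β)^[3 * g + 2] y = q - w := by
  obtain ⟨hq0, hq1, hq⟩ := inv_facts hβ1 hβ2 hb
  have h4 : (0 : ℝ) < q ^ 4 := by positivity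
  have h2 : (0 : ℝ) < q ^ 2 := by positivity
  have hwq : w ≤ q := by nlinarith
  have hy1 : q ^ 4 < q - y := by rw [hy]; exact Phi_gt hq0 g (h4.trans hw0)
  have hy2 : q - y ≤ q - q ^ 2 := by
    have := Phi_le hq0 hq hq1 g hw
    rw [hy]; nlinarith
  obtain ⟨s1, s2, s3⟩ := stepA hβ1 hβ2 hb hy1 hy2
  obtain ⟨i1, i2⟩ := chainB hβ1 hβ2 hb (h4.trans hw0) hwq g (Tmap β (Tmap β y)) (by
    have e : q ^ 2 * (q - Tmap β (Tmap β y)) = q ^ 2 * (q ^ (3 * g) * w) := by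
      rw [hy] at s2
      unfold Phi at s2
      linear_combination -s2
    exact mul_left_cancel₀ h2.ne' e)
  refine ⟨?_, by simpa using i2⟩
  intro j hj hj0
  match j, hj, hj0 with
  | 1, _, _ => simp only [iterate_succ, iterate_zero, comp_apply, id]; linarith
  | j + 2, hj, _ => simpa using i1 j (by omega)

lemma Tmap_iter_mem {x : ℝ} (hx : x ∈ Set.Ico (0 : ℝ) 1) (n : ℕ) :
    (Tmap β)^[n] x ∈ Set.Ico (0 : ℝ) 1 := by
  cases n with
  | zero => exact hx
  | succ n =>
    rw [iterate_succ_apply']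
    exact ⟨Int.fract_nonneg _, Int.fract_lt_one _⟩

lemma lower (hβ1 : β ^ 3 = β ^ 2 + β + 1) (hβ2 : 1 < β) (hb : β * q = 1)
    {k1 k2 k3 : ℕ} {U0 U1 U2 : ℝ}
    (hU0 : U0 = Phi q k1 U1) (hU1 : U1 = Phi q k2 U2) (hU2 : U2 = Phi q k3 U0)
    (a0 : q ^ 4 < U0) (a1 : q ^ 4 < U1) (a2 : q ^ 4 < U2)
    (b0 : U0 ≤ q ^ 3) (b1 : U1 ≤ q ^ 3) (b2 : U2 ≤ q ^ 3) (m1 : U1 < U0) (m2 : U2 < U0) :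
    (∀ n, q - U0 ≤ (Tmap β)^[n] (q - U0)) ∧
      minimalPeriod (Tmap β) (q - U0) = 3 * (k1 + k2 + k3) + 6 := by
  set v := q - U0 with hv
  obtain ⟨r1, f1⟩ := run hβ1 hβ2 hb (y := v) (g := k1) a1 b1 (by rw [hv, ← hU0]; ring)
  obtain ⟨r2, f2⟩ := run hβ1 hβ2 hb (y := q - U1) (g := k2) a2 b2 (by rw [← hU1]; ring)
  obtain ⟨r3, f3⟩ := run hβ1 hβ2 hb (y := q - U2) (g := k3) a0 b0 (by rw [← hU2]; ring)
  have F2 : ∀ j, (Tmap β)^[j + (3 * k1 + 2)] v = (Tmap β)^[j] (q - U1) := by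
    intro j; rw [iterate_add_apply, f1]
  have F3 : ∀ j, (Tmap β)^[j + (3 * k2 + 2) + (3 * k1 + 2)] v = (Tmap β)^[j] (q - U2) := by
    intro j; rw [F2, iterate_add_apply, f2]
  set p := 3 * (k1 + k2 + k3) + 6 with hp
  have hper : IsPeriodicPt (Tmap β) p v := by
    have := F3 (3 * k3 + 2)
    rw [f3] at this
    rw [show 3 * k3 + 2 + (3 * k2 + 2) + (3 * k1 + 2) = p by omega] at this
    exact this
  have hgt : ∀ j, 0 < j → j < p → v < (Tmap β)^[j] v := by
    intro j hj0 hj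
    rcases lt_or_ge j (3 * k1 + 2) with h | h
    · have := r1 j h hj0
      linarith
    obtain ⟨i, rfl⟩ := Nat.exists_eq_add_of_le' h
    rcases Nat.eq_zero_or_pos i with rfl | hi
    · rw [F2]; simp; linarith
    rcases lt_or_ge i (3 * k2 + 2) with h' | h'
    · rw [F2]
      have := r2 i h' hi
      linarith
    obtain ⟨i, rfl⟩ := Nat.exists_eq_add_of_le' h'
    rw [F3]
    rcases Nat.eq_zero_or_pos i with rfl | hi
    · simp; linarith
    have := r3 i (by omega) hi
    linarith
  refine ⟨fun n => ?_, ?_⟩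
  · rw [← hper.iterate_mod_apply n]
    rcases Nat.eq_zero_or_pos (n % p) with h | h
    · rw [h]; simp
    · exact (hgt _ h (Nat.mod_lt _ (by omega))).le
  · have hle := hper.minimalPeriod_le (by omega)
    have h0 := hper.minimalPeriod_pos (by omega)
    rcases Nat.eq_or_lt_of_le hle with h | h
    · exact h
    · have := hgt _ h0 h
      rw [iterate_minimalPeriod] at this
      exact absurd this (lt_irrefl _)

end lower

/-! ### Values of periodic words -/

section value

variable {β q : ℝ}

/-- The value of the word `W` followed by a tail of value `y`. -/
def wordVal (q y : ℝ) (W : List ℕ) : ℝ := W.foldr (fun (d : ℕ) (s : ℝ) => q * (d + s)) y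

lemma wordVal_append (y : ℝ) (A B : List ℕ) :
    wordVal q y (A ++ B) = wordVal q (wordVal q y B) A := by
  simp [wordVal]

lemma wordVal_rep (hq : q + q ^ 2 + q ^ 3 = 1) (y : ℝ) (n : ℕ) :
    wordVal q y (List.replicate n ([0, 1, 1] : List ℕ)).flatten = q - q ^ (3 * n) * (q - y) := by
  induction n with
  | zero => simp [wordVal]
  | succ n ih =>
    rw [List.replicate_succ, List.flatten_cons, wordVal_append, ih]
    simp only [wordVal, List.foldr]
    push_cast
    linear_combination q * hq

lemma wordVal_block (hq : q + q ^ 2 + q ^ 3 = 1) (y : ℝ) (n : ℕ) :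
    q - wordVal q (wordVal q y (List.replicate n ([0, 1, 1] : List ℕ)).flatten) [0, 1] =
      Phi q n (q - y) := by
  rw [wordVal_rep hq]
  simp only [wordVal, List.foldr, Phi]
  push_cast
  linear_combination -q * hq

lemma wordVal_eq_sum (y : ℝ) (W : List ℕ) :
    wordVal q y W =
      ∑ i ∈ Finset.range W.length, ((W.getD i 0 : ℕ) : ℝ) * q ^ (i + 1) + q ^ W.length * y := by
  induction W with
  | nil => simp [wordVal]
  | cons d W ih =>
    have : wordVal q y (d :: W) = q * (d + wordVal q y W) := rfl
    rw [this, ih, List.length_cons, Finset.sum_range_succ', mul_add, mul_add, Finset.mul_sum]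
    have e : ∀ i ∈ Finset.range W.length, q * (((W.getD i 0 : ℕ) : ℝ) * q ^ (i + 1)) =
        (((d :: W).getD (i + 1) 0 : ℕ) : ℝ) * q ^ (i + 1 + 1) := by
      intro i _
      rw [List.getD_cons_succ]; ring
    rw [Finset.sum_congr rfl e, List.getD_cons_zero]
    ring

lemma val_wordSeq (hq0 : 0 < q) (hq1 : q < 1) (hb : β * q = 1) (W : List ℕ)
    (hW : 0 < W.length) :
    val β (wordSeq W) = wordVal q (val β (wordSeq W)) W := by
  have hβ : ∀ i : ℕ, (1 : ℝ) / β ^ i = q ^ i := by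
    intro i
    have : β ^ i * q ^ i = 1 := by rw [← mul_pow, hb, one_pow]
    have hne : β ^ i ≠ 0 := left_ne_zero_of_mul_eq_one this
    field_simp
    linarith
  have hval : val β (wordSeq W) = ∑' i, (wordSeq W i : ℝ) * q ^ (i + 1) := by
    unfold val
    refine tsum_congr fun i => ?_
    rw [← hβ, mul_one_div]
  have hbd : ∀ i, (wordSeq W i : ℝ) ≤ (W.sum : ℕ) := by
    intro i
    unfold wordSeq
    have hi : i % W.length < W.length := Nat.mod_lt _ hW
    rw [List.getD_eq_getElem _ _ hi]
    exact_mod_cast List.single_le_sum (by simp) _ (List.getElem_mem hi)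
  have hsum : Summable fun i => (wordSeq W i : ℝ) * q ^ (i + 1) := by
    refine Summable.of_nonneg_of_le (fun i => by positivity) (fun i => ?_)
      (((summable_geometric_of_lt_one hq0.le hq1).mul_left ((W.sum : ℕ) : ℝ)))
    have h1 : q ^ (i + 1) ≤ q ^ i := pow_le_pow_of_le_one hq0.le hq1.le (by omega)
    have := hbd i
    gcongr
  rw [wordVal_eq_sum, hval]
  conv_lhs => rw [← hsum.sum_add_tsum_nat_add W.length]
  congr 1
  · refine Finset.sum_congr rfl fun i hi => ?_
    unfold wordSeq
    rw [Nat.mod_eq_of_lt (Finset.mem_range.1 hi)]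
  · rw [← tsum_mul_left]
    refine tsum_congr fun i => ?_
    have : wordSeq W (i + W.length) = wordSeq W i := by
      unfold wordSeq; rw [Nat.add_mod_right]
    rw [this]; ring

end value

/-! ### The critical values -/

/-- With `z = k + 1`, the three families correspond to `k2 = k`, `k + 1`, `k + 2`. -/
lemma S_eq {β : ℝ} (hβ1 : β ^ 3 = β ^ 2 + β + 1) (hβ2 : 1 < β) (hβ3 : β < 2) (k k2 p : ℕ)
    (hp : p = 9 * k + 9 ∧ k2 = k ∨ p = 9 * k + 12 ∧ k2 = k + 1 ∨ p = 9 * k + 15 ∧ k2 = k + 2) :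
    S β p = val β (wordSeq ([0,1] ++ (List.replicate k ([0,1,1] : List ℕ)).flatten ++ [0,1] ++
      (List.replicate k2 ([0,1,1] : List ℕ)).flatten ++ [0,1] ++
      (List.replicate (k + 1) ([0,1,1] : List ℕ)).flatten)) := by
  set W := [0,1] ++ (List.replicate k ([0,1,1] : List ℕ)).flatten ++ [0,1] ++
      (List.replicate k2 ([0,1,1] : List ℕ)).flatten ++ [0,1] ++
      (List.replicate (k + 1) ([0,1,1] : List ℕ)).flatten with hW
  set v := val β (wordSeq W) with hv
  obtain ⟨q, hb⟩ : ∃ q, β * q = 1 := ⟨β⁻¹, mul_inv_cancel₀ (by linarith)⟩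
  obtain ⟨hq0, hq1, hq⟩ := inv_facts hβ1 hβ2 hb
  have hvW : v = wordVal q v W := val_wordSeq hq0 hq1 hb W (by simp [hW])
  obtain ⟨U0, hU⟩ : ∃ U0, U0 = q - v := ⟨_, rfl⟩
  have hfix : U0 = Phi q k (Phi q k2 (Phi q (k + 1) U0)) := by
    rw [hU]
    conv_lhs => rw [hvW]
    rw [hW]
    simp only [List.append_assoc]
    rw [wordVal_append, wordVal_append, wordVal_block hq, wordVal_append, wordVal_append,
      wordVal_block hq, wordVal_append, wordVal_block hq]
  obtain ⟨U2, hU2⟩ : ∃ U2, U2 = Phi q (k + 1) U0 := ⟨_, rfl⟩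
  obtain ⟨U1, hU1⟩ : ∃ U1, U1 = Phi q k2 U2 := ⟨_, rfl⟩
  have hU0 : U0 = Phi q k U1 := by rw [hU1, hU2]; exact hfix
  have h4 : (0 : ℝ) < q ^ 4 := by positivity
  obtain ⟨a0, b0⟩ := fix_bounds hq0 hq1 hq hfix
  have a2 : q ^ 4 < U2 := by rw [hU2]; exact Phi_gt hq0 _ (h4.trans a0)
  have a1 : q ^ 4 < U1 := by rw [hU1]; exact Phi_gt hq0 _ (h4.trans a2)
  have b2 : U2 ≤ q ^ 3 := by rw [hU2]; exact Phi_le hq0 hq hq1 _ b0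
  have b1 : U1 ≤ q ^ 3 := by rw [hU1]; exact Phi_le hq0 hq hq1 _ b2
  have hq3 : q ^ 3 ≤ q := by nlinarith
  have m2 : U2 < U0 := by
    rw [hU2, hU0]
    exact Phi_lt_Phi hq0 hq1 (Nat.lt_succ_self k) a1 (by rw [← hU0]; linarith)
  have m1 : U1 < U0 := by
    by_cases hk : k < k2
    · have := Phi_lt_Phi hq0 hq1 hk a1 (b2.trans hq3)
      rwa [← hU0, ← hU1] at this
    · have hk' : k2 = k := by omega
      subst hk'
      have m12 : U2 < U1 := by
        have := Phi_lt_Phi hq0 hq1 (Nat.lt_succ_self k2) a2 (b0.trans hq3)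
        rwa [← hU1, ← hU2] at this
      have := (Phi_lt_iff hq0 k2).2 m12
      rwa [← hU0, ← hU1] at this
  obtain ⟨o1, o2⟩ := lower hβ1 hβ2 hb hU0 hU1 hU2 a0 a1 a2 b0 b1 b2 m1 m2
  have hvU : q - U0 = v := by rw [hU]; ring
  rw [hvU] at o1 o2
  have hq2v : q ^ 2 ≤ v := by nlinarith
  have hv0 : 0 ≤ v := le_trans (by positivity) hq2v
  have hv1 : v < 1 := by linarith
  have hmp : minimalPeriod (Tmap β) v = p := by rw [o2]; omega
  have hg : IsGreatest {t | t ∈ Set.Ico (0:ℝ) 1 ∧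
      ∃ x ∈ K β t, Function.minimalPeriod (Tmap β) x = p} v := by
    refine ⟨⟨⟨hv0, hv1⟩, v, ⟨⟨hv0, hv1⟩, o1⟩, hmp⟩, ?_⟩
    rintro t ⟨-, x, ⟨hx, hxt⟩, hxp⟩
    by_contra hvt
    push Not at hvt
    have hgt : ∀ n, v < (Tmap β)^[n] x := fun n => hvt.trans_le (hxt n)
    have hs : ∀ n, (Tmap β)^[n + 1] x = Tmap β ((Tmap β)^[n] x) :=
      fun n => iterate_succ_apply' _ _ _
    have hs2 : ∀ n, (Tmap β)^[n + 2] x = Tmap β (Tmap β ((Tmap β)^[n] x)) :=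
      fun n => by rw [hs, hs]
    have hs3 : ∀ n, (Tmap β)^[n + 3] x = Tmap β (Tmap β (Tmap β ((Tmap β)^[n] x))) :=
      fun n => by rw [hs, hs2]
    have hpos : 0 < p := by omega
    have hpp : x ∈ periodicPts (Tmap β) := minimalPeriod_pos_iff_mem_periodicPts.1 (by omega)
    refine upper (q := q) (u := fun n => q - (Tmap β)^[n] x) (k := k) (k2 := k2) (p := p)
      ?_ ?_ hq0 hq1 hp ?_ ?_ ?_ hU0 hU1 hU2 (b1.trans hq3) (b2.trans hq3) ?_
    · intro n hn
      have := hgt n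
      obtain ⟨s1, s2, s3⟩ := stepA hβ1 hβ2 hb hn (by linarith)
      refine ⟨?_, ?_, ?_⟩
      · simp only [hs]; linarith
      · simp only [hs2]; exact s2
      · simp only [hs2]; exact s3
    · intro n hn hn'
      obtain ⟨s1, s2, s3⟩ := stepB hβ1 hβ2 hb hn hn'
      refine ⟨?_, ?_, ?_⟩
      · simp only [hs]; linarith
      · simp only [hs2]; linarith
      · simp only [hs3]; exact s3
    · intro n
      rw [iterate_add_apply, ← hxp, iterate_minimalPeriod]
    · intro n j hj0 hj h
      have h' : (Tmap β)^[j] ((Tmap β)^[n] x) = (Tmap β)^[n] x := by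
        rw [← iterate_add_apply, add_comm]
        linarith
      have h2 : IsPeriodicPt (Tmap β) j ((Tmap β)^[n] x) := h'
      have h3 := h2.minimalPeriod_le hj0
      rw [minimalPeriod_apply_iterate hpp] at h3
      omega
    · -- Three consecutive points `≥ q` would force `x ≥ q + q² + q³ = 1`.
      by_contra hno
      push Not at hno
      have hT : ∀ y, y < 1 → q ≤ y → Tmap β y = β * y - 1 := by
        intro y hy1 hy
        have := Tmap_eq (β := β) (x := y) 1 (by push_cast; nlinarith) (by push_cast; nlinarith)
        simpa using this
      have n0 := hno 0
      have n1 := hno 1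
      have n2 := hno 2
      have t0 : (Tmap β)^[1] x = β * x - 1 := hT x hx.2 (by simpa using n0)
      have t1 : (Tmap β)^[2] x = β * (Tmap β)^[1] x - 1 := by
        rw [hs 1]
        exact hT _ (Tmap_iter_mem hx 1).2 (by linarith)
      rw [t0] at t1
      rw [t1] at n2
      have hx1 := hx.2
      have : q ^ 2 * (q - (β * (β * x - 1) - 1)) ≤ 0 :=
        mul_nonpos_of_nonneg_of_nonpos (by positivity) n2
      have e : q ^ 2 * (q - (β * (β * x - 1) - 1)) = 1 - x := by
        linear_combination hq + (-(q * β * x) - x + q) * hb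
      linarith
    · intro n
      have := hgt n
      linarith
  exact hg.csSup_eq

theorem stmt17 (β : ℝ) (hβ1 : β ^ 3 = β ^ 2 + β + 1) (hβ2 : 1 < β) (hβ3 : β < 2) (z : ℕ) (hz : 1 ≤ z) :
    S β (9 * z) = val β (wordSeq ([0,1] ++ (List.replicate (z - 1) ([0,1,1] : List ℕ)).flatten ++ [0,1] ++ (List.replicate (z - 1) ([0,1,1] : List ℕ)).flatten ++ [0,1] ++ (List.replicate z ([0,1,1] : List ℕ)).flatten)) ∧
    S β (9 * z + 3) = val β (wordSeq ([0,1] ++ (List.replicate (z - 1) ([0,1,1] : List ℕ)).flatten ++ [0,1] ++ (List.replicate z ([0,1,1] : List ℕ)).flatten ++ [0,1] ++ (List.replicate z ([0,1,1] : List ℕ)).flatten)) ∧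
    S β (9 * z + 6) = val β (wordSeq ([0,1] ++ (List.replicate (z - 1) ([0,1,1] : List ℕ)).flatten ++ [0,1] ++ (List.replicate (z + 1) ([0,1,1] : List ℕ)).flatten ++ [0,1] ++ (List.replicate z ([0,1,1] : List ℕ)).flatten)) := by
  obtain ⟨k, rfl⟩ := Nat.exists_eq_add_of_le' hz
  exact ⟨S_eq hβ1 hβ2 hβ3 k k _ (by omega), S_eq hβ1 hβ2 hβ3 k (k + 1) _ (by omega),
    S_eq hβ1 hβ2 hβ3 k (k + 1 + 1) _ (by omega)⟩
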